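/- For every automorphism φ of the free group F₂ there exist a Whitehead automorphism β of type (W1) and a chain φ' of type (C1) or of type (C2) such that for every w ∈ F₂ the element φ(w) is conjugate in F₂ to β(φ'(w)). -/

import Mathlib

noncomputable section

/-- The free group of rank two. -/
abbrev F : Type := FreeGroup (Fin 2)

/-- The generator `a`. -/
def ga : F := FreeGroup.of 0

/-- The generator `b`. -/
def gb : F := FreeGroup.of 1

/-- Build an automorphism of `F` from images of the generators together with
an explicit inverse. -/
def mkAut (x y xi yi : F)
    (h1 : FreeGroup.lift ![xi, yi] x = ga)
    (h2 : FreeGroup.lift ![xi, yi] y = gb)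
    (h3 : FreeGroup.lift ![x, y] xi = ga)
    (h4 : FreeGroup.lift ![x, y] yi = gb) : MulAut F :=
  MonoidHom.toMulEquiv (FreeGroup.lift ![x, y]) (FreeGroup.lift ![xi, yi])
    (by
      ext i
      fin_cases i
      · simpa [ga] using h1
      · simpa [gb] using h2)
    (by
      ext i
      fin_cases i
      · simpa [ga] using h3
      · simpa [gb] using h4)

/-- `σ : a ↦ ab, b ↦ b`. -/
def σ : MulAut F :=
  mkAut (ga * gb) gb (ga * gb⁻¹) gb
    (by simp [ga, gb]) (by simp [ga, gb]) (by simp [ga, gb]) (by simp [ga, gb])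

/-- `τ : a ↦ a, b ↦ ba`. -/
def τ : MulAut F :=
  mkAut ga (gb * ga) ga (gb * ga⁻¹)
    (by simp [ga, gb]) (by simp [ga, gb]) (by simp [ga, gb]) (by simp [ga, gb])

/-- `δ₁ : a ↦ b⁻¹ab, b ↦ b`. -/
def δ₁ : MulAut F :=
  mkAut (gb⁻¹ * ga * gb) gb (gb * ga * gb⁻¹) gb
    (by simp [ga, gb, mul_assoc]) (by simp [ga, gb]) (by simp [ga, gb, mul_assoc]) (by simp [ga, gb])

/-- `δ₂ : a ↦ bab⁻¹, b ↦ b`. -/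
def δ₂ : MulAut F :=
  mkAut (gb * ga * gb⁻¹) gb (gb⁻¹ * ga * gb) gb
    (by simp [ga, gb, mul_assoc]) (by simp [ga, gb]) (by simp [ga, gb, mul_assoc]) (by simp [ga, gb])

/-- `δ₃ : a ↦ a, b ↦ a⁻¹ba`. -/
def δ₃ : MulAut F :=
  mkAut ga (ga⁻¹ * gb * ga) ga (ga * gb * ga⁻¹)
    (by simp [ga, gb]) (by simp [ga, gb, mul_assoc]) (by simp [ga, gb]) (by simp [ga, gb, mul_assoc])

/-- `δ₄ : a ↦ a, b ↦ aba⁻¹`. -/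
def δ₄ : MulAut F :=
  mkAut ga (ga * gb * ga⁻¹) ga (ga⁻¹ * gb * ga)
    (by simp [ga, gb]) (by simp [ga, gb, mul_assoc]) (by simp [ga, gb]) (by simp [ga, gb, mul_assoc])

/-- `π : a ↦ b, b ↦ a⁻¹`. -/
def pi' : MulAut F :=
  mkAut gb ga⁻¹ gb⁻¹ ga
    (by simp [ga, gb]) (by simp [ga, gb]) (by simp [ga, gb]) (by simp [ga, gb])

/-- Word length of (the reduced word representing) an element of `F`. -/
def len (w : F) : ℕ := w.toWord.length

/-- Cyclic length: minimal word length among all conjugates. -/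
def cyclen (w : F) : ℕ := sInf {n | ∃ g : F, len (g * w * g⁻¹) = n}

/-- The chain `τ^{m_k}σ^{l_k}⋯τ^{m_1}σ^{l_1}` of type (C1) determined by the list
`[(l_k, m_k), …, (l_1, m_1)]` of pairs of exponents. -/
def chainC1 (c : List (ℕ × ℕ)) : MulAut F :=
  (c.map fun p => τ ^ p.2 * σ ^ p.1).prod

/-- The chain `τ^{-m_k}σ^{-l_k}⋯τ^{-m_1}σ^{-l_1}` of type (C2) determined by the list
`[(l_k, m_k), …, (l_1, m_1)]` of pairs of exponents. -/
def chainC2 (c : List (ℕ × ℕ)) : MulAut F :=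
  (c.map fun p => (τ ^ p.2)⁻¹ * (σ ^ p.1)⁻¹).prod

/-- Number of factors of `σ` in a chain. -/
def sigmaCount (c : List (ℕ × ℕ)) : ℕ := (c.map Prod.fst).sum

/-- Number of factors of `τ` in a chain. -/
def tauCount (c : List (ℕ × ℕ)) : ℕ := (c.map Prod.snd).sum

/-- The length `Σ (l_i + m_i)` of a chain. -/
def chainLen (c : List (ℕ × ℕ)) : ℕ := sigmaCount c + tauCount c

/-- A Whitehead automorphism of type (W1): it permutes `{a, a⁻¹, b, b⁻¹}`. -/
def IsW1 (β : MulAut F) : Prop :=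
  β ga ∈ ({ga, ga⁻¹, gb, gb⁻¹} : Set F) ∧ β gb ∈ ({ga, ga⁻¹, gb, gb⁻¹} : Set F)

/-- A chain of type (C1). -/
def IsC1 (φ : MulAut F) : Prop := ∃ c : List (ℕ × ℕ), c ≠ [] ∧ φ = chainC1 c

/-- A chain of type (C2). -/
def IsC2 (φ : MulAut F) : Prop := ∃ c : List (ℕ × ℕ), c ≠ [] ∧ φ = chainC2 c

/-- A positive element: a product of the generators `a` and `b`. -/
def IsPositive (w : F) : Prop := w ∈ Submonoid.closure ({ga, gb} : Set F)

/-- The four automorphisms `δ₁, δ₂, δ₃, δ₄`. -/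
def δIdx : Fin 4 → MulAut F := ![δ₁, δ₂, δ₃, δ₄]

/-
Composing an automorphism with the elementary Nielsen transformations, which generate all inner
automorphisms, one may assume that the images of `a` and `b` have minimal total length, even up to
simultaneous conjugation. They then form a Nielsen reduced pair, so the inverse automorphism does
not increase lengths and is a signed permutation of the basis. Hence `Aut F₂` is generated by `σ`,
the exchange `p` of `a` and `b`, and the inversion `n` of `a`. In `Out F₂`, conjugation by `p`
exchanges `σ` and `τ`, conjugation by `n` inverts both, and `τ * σ⁻¹ = p⁻¹ * τ * n`. Therefore the
products of a signed permutation and a positive or negative word in `σ` and `τ` are closed under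
right multiplication by all the generators.
-/

section CommonPrefix

variable {β : Type*} [DecidableEq β]

/-- The length of the longest common prefix of two words; it measures the cancellation in a product
`u⁻¹ * v` of elements of a free group. -/
def commonPrefixLength : List β → List β → ℕ
  | x :: xs, y :: ys => if x = y then commonPrefixLength xs ys + 1 else 0
  | _, _ => 0

lemma min_commonPrefixLength_le (u v w : List β) :
    min (commonPrefixLength u v) (commonPrefixLength v w) ≤ commonPrefixLength u w := by
  induction u generalizing v w with
  | nil => simp [commonPrefixLength]
  | cons x xs ih =>
    rcases v with _ | ⟨y, ys⟩ <;> rcases w with _ | ⟨z, zs⟩ <;> simp only [commonPrefixLength]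
    all_goals grind

lemma exists_append_length_eq_commonPrefixLength (u v : List β) :
    ∃ p u' v', u = p ++ u' ∧ v = p ++ v' ∧ p.length = commonPrefixLength u v ∧
      ∀ x ∈ u'.head?, x ∉ v'.head? := by
  induction u generalizing v with
  | nil => exact ⟨[], [], v, by simp [commonPrefixLength]⟩
  | cons x xs ih =>
    rcases v with _ | ⟨y, ys⟩
    · exact ⟨[], x :: xs, [], by simp [commonPrefixLength]⟩
    · by_cases hxy : x = y
      · obtain ⟨p, u', v', rfl, rfl, hp, hne⟩ := ih ys
        exact ⟨x :: p, u', v', by simp, by simp [hxy], by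
          simp [commonPrefixLength, hxy, hp], hne⟩
      · exact ⟨[], x :: xs, y :: ys, by simp [commonPrefixLength, Ne.symm hxy, hxy]⟩

end CommonPrefix

section GromovProduct

variable {α : Type*}

lemma isReduced_invRev_append {u v : List (α × Bool)} (hu : FreeGroup.IsReduced u)
    (hv : FreeGroup.IsReduced v) (h : ∀ x ∈ u.head?, x ∉ v.head?) :
    FreeGroup.IsReduced (FreeGroup.invRev u ++ v) := by
  have hu' : FreeGroup.IsReduced (FreeGroup.invRev u) := by
    refine List.isChain_reverse.mpr ((List.isChain_map _).mpr (hu.imp fun x y hxy heq => ?_))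
    simpa using (hxy heq.symm).symm
  refine List.isChain_append.mpr ⟨hu', hv, fun x hx y hy hxy => ?_⟩
  by_contra hne
  have hx' : y ∈ u.head? := by
    obtain ⟨z, hz, rfl⟩ : ∃ z ∈ u.head?, (z.1, !z.2) = x := by
      simpa [FreeGroup.invRev, List.getLast?_reverse] using hx
    rwa [show y = z from Prod.ext hxy.symm (by grind)]
  exact h y hx' hy

variable [DecidableEq α]

/-- The Gromov product of two elements of a free group, based at `1`, in the Cayley tree. -/
def gromovProduct (u v : FreeGroup α) : ℕ := commonPrefixLength u.toWord v.toWord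

lemma norm_mk_of_isReduced {l : List (α × Bool)} (hl : FreeGroup.IsReduced l) :
    (FreeGroup.mk l).norm = l.length := by
  rw [FreeGroup.norm, FreeGroup.toWord_mk, hl.reduce_eq]

lemma norm_inv_mul_add_two_mul_gromovProduct (u v : FreeGroup α) :
    (u⁻¹ * v).norm + 2 * gromovProduct u v = u.norm + v.norm := by
  obtain ⟨p, u', v', hu, hv, hp, hne⟩ :=
    exists_append_length_eq_commonPrefixLength u.toWord v.toWord
  have hu' : FreeGroup.IsReduced u' :=
    List.IsChain.right_of_append (hu ▸ FreeGroup.isReduced_toWord (x := u))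
  have hv' : FreeGroup.IsReduced v' :=
    List.IsChain.right_of_append (hv ▸ FreeGroup.isReduced_toWord (x := v))
  have hcancel : u⁻¹ * v = FreeGroup.mk (FreeGroup.invRev u' ++ v') := by
    rw [← FreeGroup.mk_toWord (x := u), ← FreeGroup.mk_toWord (x := v), hu, hv,
      ← FreeGroup.mul_mk, ← FreeGroup.mul_mk, ← FreeGroup.mul_mk, ← FreeGroup.inv_mk]
    group
  rw [hcancel, norm_mk_of_isReduced (isReduced_invRev_append hu' hv' hne), gromovProduct, ← hp,
    FreeGroup.norm, FreeGroup.norm, hu, hv]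
  simp only [List.length_append, FreeGroup.invRev_length]
  ring

lemma norm_mul_add_two_mul_gromovProduct (u v : FreeGroup α) :
    (u * v).norm + 2 * gromovProduct u⁻¹ v = u.norm + v.norm := by
  simpa using norm_inv_mul_add_two_mul_gromovProduct u⁻¹ v

lemma min_gromovProduct_le (u v w : FreeGroup α) :
    min (gromovProduct u v) (gromovProduct v w) ≤ gromovProduct u w :=
  min_commonPrefixLength_le _ _ _

lemma gromovProduct_comm (u v : FreeGroup α) : gromovProduct u v = gromovProduct v u := by
  have huv := norm_inv_mul_add_two_mul_gromovProduct u v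
  have hvu := norm_inv_mul_add_two_mul_gromovProduct v u
  have hinv : (u⁻¹ * v).norm = (v⁻¹ * u).norm := by
    rw [← FreeGroup.norm_inv_eq, mul_inv_rev, inv_inv]
  omega

lemma exists_mul_eq_and_norm_eq {u : FreeGroup α} {k : ℕ} (hk : k ≤ u.norm) :
    ∃ p q, p * q = u ∧ p.norm = k ∧ q.norm = u.norm - k := by
  have hp : FreeGroup.IsReduced (u.toWord.take k) :=
    List.IsChain.take FreeGroup.isReduced_toWord k
  have hq : FreeGroup.IsReduced (u.toWord.drop k) :=
    List.IsChain.drop FreeGroup.isReduced_toWord k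
  refine ⟨.mk (u.toWord.take k), .mk (u.toWord.drop k), ?_, ?_, ?_⟩
  · rw [FreeGroup.mul_mk, List.take_append_drop, FreeGroup.mk_toWord]
  · rw [norm_mk_of_isReduced hp, List.length_take_of_le hk]
  · rw [norm_mk_of_isReduced hq, List.length_drop, FreeGroup.norm]

lemma norm_lt_norm_sq {u : FreeGroup α} (hu : u ≠ 1) : u.norm < (u ^ 2).norm := by
  have hword := FreeGroup.reduceCyclically.conj_conjugator_reduceCyclically u.toWord
  have hcore : FreeGroup.reduceCyclically u.toWord ≠ [] := by
    intro hnil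
    rw [hnil, List.append_nil] at hword
    rw [← FreeGroup.mk_toWord (x := u), ← hword, ← FreeGroup.mul_mk, ← FreeGroup.inv_mk,
      mul_inv_cancel] at hu
    exact hu rfl
  have hlen := congrArg List.length hword
  have hsq := FreeGroup.reduceCyclically.reduce_flatten_replicate_succ
    (FreeGroup.isReduced_toWord (x := u)) 1
  have hpos := List.length_pos_iff.mpr hcore
  rw [FreeGroup.norm, FreeGroup.norm, FreeGroup.toWord_pow, hsq]
  simp only [List.length_append, FreeGroup.invRev_length, List.length_flatten,
    List.map_replicate, List.sum_replicate, smul_eq_mul] at hlen ⊢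
  omega

lemma two_mul_gromovProduct_inv_self_lt {u : FreeGroup α} (hu : u ≠ 1) :
    2 * gromovProduct u⁻¹ u < u.norm := by
  have hsq := norm_lt_norm_sq hu
  have hmul := norm_mul_add_two_mul_gromovProduct u u
  rw [← pow_two] at hmul
  omega

lemma gromovProduct_mul_right {u v : FreeGroup α} (h : (u * v).norm = u.norm + v.norm) :
    gromovProduct u (u * v) = u.norm := by
  have huv := norm_inv_mul_add_two_mul_gromovProduct u (u * v)
  rw [inv_mul_cancel_left] at huv
  omega

lemma norm_mul_add_norm_of_norm_le_gromovProduct {u v : FreeGroup α}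
    (h : u.norm ≤ gromovProduct u⁻¹ v) : (u * v).norm + u.norm = v.norm := by
  have hmul := norm_mul_add_two_mul_gromovProduct u v
  have htri := FreeGroup.norm_mul_le u⁻¹ (u * v)
  rw [inv_mul_cancel_left, FreeGroup.norm_inv_eq] at htri
  omega

/-- With `y = p * q` cut in the middle, `x` begins with `q⁻¹` and ends with `p⁻¹`, so conjugation by
`q` turns `x * y` into the shorter `q * x * p` and `y` into `q * p`. -/
lemma exists_conj_norm_add_norm_lt {x y : FreeGroup α} (hy : y ≠ 1) (hle : y.norm ≤ x.norm)
    (hxy : 2 * gromovProduct x⁻¹ y = y.norm) (hyx : 2 * gromovProduct y⁻¹ x = y.norm) :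
    ∃ g, (g * (x * y) * g⁻¹).norm + (g * y * g⁻¹).norm < x.norm + y.norm := by
  obtain ⟨p, q, rfl, hp, hq⟩ := exists_mul_eq_and_norm_eq (u := y) (k := y.norm / 2) (by omega)
  have hpos : (p * q).norm ≠ 0 := FreeGroup.norm_eq_zero.not.mpr hy
  have hxp : p.norm ≤ gromovProduct x⁻¹ p := by
    have hpy := gromovProduct_mul_right (u := p) (v := q) (by omega)
    have := min_gromovProduct_le x⁻¹ (p * q) p
    rw [gromovProduct_comm (p * q) p] at this
    omega
  have hqx : q.norm ≤ gromovProduct q⁻¹ x := by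
    have hqy := gromovProduct_mul_right (u := q⁻¹) (v := p⁻¹) (by
      rw [← mul_inv_rev]
      simp only [FreeGroup.norm_inv_eq]
      omega)
    rw [← mul_inv_rev, FreeGroup.norm_inv_eq] at hqy
    have := min_gromovProduct_le q⁻¹ (p * q)⁻¹ x
    omega
  have hqxnorm := norm_mul_add_norm_of_norm_le_gromovProduct hqx
  have hqxp : p.norm ≤ gromovProduct (q * x)⁻¹ p := by
    have hqxx := gromovProduct_mul_right (u := (q * x)⁻¹) (v := q) (by
      rw [FreeGroup.norm_inv_eq, hqxnorm, mul_inv_rev, inv_mul_cancel_right,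
        FreeGroup.norm_inv_eq])
    rw [mul_inv_rev, inv_mul_cancel_right, ← mul_inv_rev, FreeGroup.norm_inv_eq] at hqxx
    have := min_gromovProduct_le (q * x)⁻¹ x⁻¹ p
    omega
  refine ⟨q, ?_⟩
  rw [show q * (x * (p * q)) * q⁻¹ = q * x * p by group, show q * (p * q) * q⁻¹ = q * p by group]
  have hshort := norm_mul_add_two_mul_gromovProduct (q * x) p
  have hqp := FreeGroup.norm_mul_le q p
  omega

end GromovProduct

section NielsenReduced

variable {ι α G : Type*} [Group G]

/-- The value at a letter of the homomorphism from the free group determined by `f`. -/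
def letterValue (f : ι → G) (r : ι × Bool) : G := cond r.2 (f r.1) (f r.1)⁻¹

lemma letterValue_not (f : ι → G) (r : ι × Bool) :
    letterValue f (r.1, !r.2) = (letterValue f r)⁻¹ := by
  rcases r with ⟨i, _ | _⟩ <;> simp [letterValue]

lemma letterValue_ne_one {f : ι → G} (hf : ∀ i, f i ≠ 1) (r : ι × Bool) :
    letterValue f r ≠ 1 := by
  rcases r with ⟨i, _ | _⟩ <;> simp [letterValue, hf i]

variable [DecidableEq α]

lemma norm_letterValue (f : ι → FreeGroup α) (r : ι × Bool) :
    (letterValue f r).norm = (f r.1).norm := by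
  rcases r with ⟨i, _ | _⟩ <;> simp [letterValue]

/-- Nielsen's condition on a family of elements of a free group: in a product of three consecutive
values of `f` or their inverses, a letter of the middle factor always survives both
cancellations. -/
def IsNielsenReduced (f : ι → FreeGroup α) : Prop :=
  ∀ r s t : ι × Bool, (r.1 = s.1 → r.2 = s.2) → (s.1 = t.1 → s.2 = t.2) →
    gromovProduct (letterValue f r)⁻¹ (letterValue f s) +
      gromovProduct (letterValue f s)⁻¹ (letterValue f t) < (letterValue f s).norm

namespace IsNielsenReduced

variable {f : ι → FreeGroup α}

/-- The cancellation with a preceding factor does not see beyond the first factor, which is what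
makes the induction go through. -/
lemma gromovProduct_prod_and_length_le (hf : IsNielsenReduced f) {r s : ι × Bool}
    {l : List (ι × Bool)} (hl : FreeGroup.IsReduced (r :: s :: l)) :
    gromovProduct (letterValue f r)⁻¹ ((s :: l).map (letterValue f)).prod =
        gromovProduct (letterValue f r)⁻¹ (letterValue f s) ∧
      gromovProduct (letterValue f r)⁻¹ (letterValue f s) + (s :: l).length ≤
        ((s :: l).map (letterValue f)).prod.norm := by
  induction l generalizing r s with
  | nil =>
    have hrs := (FreeGroup.isReduced_cons_cons.mp hl).1
    have hlt := hf r s s hrs fun _ => rfl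
    simp only [List.map_cons, List.map_nil, List.prod_singleton, List.length_singleton, true_and]
    omega
  | cons t l ih =>
    obtain ⟨hrs, hl⟩ := FreeGroup.isReduced_cons_cons.mp hl
    have hst := (FreeGroup.isReduced_cons_cons.mp hl).1
    obtain ⟨hgp, hlen⟩ := ih hl
    have hlt := hf r s t hrs hst
    rw [List.map_cons, List.prod_cons, List.length_cons]
    set x := (letterValue f r)⁻¹
    set y := letterValue f s
    set w := ((t :: l).map (letterValue f)).prod
    have hnorm := norm_mul_add_two_mul_gromovProduct y w
    have hyw : gromovProduct x y < gromovProduct y (y * w) := by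
      have := norm_inv_mul_add_two_mul_gromovProduct y (y * w)
      rw [inv_mul_cancel_left] at this
      omega
    have hle := min_gromovProduct_le x y (y * w)
    have hge := min_gromovProduct_le x (y * w) y
    rw [gromovProduct_comm (y * w) y] at hge
    omega

theorem norm_le_norm_lift [DecidableEq ι] (hf : IsNielsenReduced f) (w : FreeGroup ι) :
    w.norm ≤ (FreeGroup.lift f w).norm := by
  have hw : FreeGroup.lift f w = (w.toWord.map (letterValue f)).prod := by
    conv_lhs => rw [← FreeGroup.mk_toWord (x := w), FreeGroup.lift_mk]
    rfl
  rw [hw, FreeGroup.norm]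
  have hred := FreeGroup.isReduced_toWord (x := w)
  rcases hword : w.toWord with _ | ⟨s, l⟩
  · exact Nat.zero_le _
  · rw [hword] at hred
    have := (hf.gromovProduct_prod_and_length_le
      (FreeGroup.isReduced_cons_cons.mpr ⟨fun _ => rfl, hred⟩)).2
    omega

end IsNielsenReduced

/-- No Nielsen move `x ↦ x * y` on two members of the family or their inverses, even if followed by
a simultaneous conjugation, shortens the pair. Without conjugations ties could occur, and a family
of minimal total length need not be Nielsen reduced. -/
def IsNielsenMinimal (f : ι → FreeGroup α) : Prop :=
  ∀ r s : ι × Bool, r.1 ≠ s.1 → ∀ g : FreeGroup α,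
    (letterValue f r).norm + (letterValue f s).norm ≤
      (g * (letterValue f r * letterValue f s) * g⁻¹).norm + (g * letterValue f s * g⁻¹).norm

namespace IsNielsenMinimal

lemma two_mul_gromovProduct_le_norm_right {f : ι → FreeGroup α} (hf : IsNielsenMinimal f)
    {r s : ι × Bool} (hrs : r.1 ≠ s.1) :
    2 * gromovProduct (letterValue f r)⁻¹ (letterValue f s) ≤ (letterValue f s).norm := by
  have hmin := hf r s hrs 1
  simp only [one_mul, inv_one, mul_one] at hmin
  have := norm_mul_add_two_mul_gromovProduct (letterValue f r) (letterValue f s)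
  omega

lemma two_mul_gromovProduct_le_norm_left {f : ι → FreeGroup α} (hf : IsNielsenMinimal f)
    {r s : ι × Bool} (hrs : r.1 ≠ s.1) :
    2 * gromovProduct (letterValue f r)⁻¹ (letterValue f s) ≤ (letterValue f r).norm := by
  have h := hf.two_mul_gromovProduct_le_norm_right (r := (s.1, !s.2)) (s := (r.1, !r.2)) hrs.symm
  rwa [letterValue_not, letterValue_not, inv_inv, FreeGroup.norm_inv_eq, gromovProduct_comm] at h

lemma gromovProduct_add_lt_of_ne {f : ι → FreeGroup α} (hf : IsNielsenMinimal f)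
    (hne : ∀ i, f i ≠ 1) {r s t : ι × Bool} (hrs : r.1 ≠ s.1) (hrt : r.1 = t.1) :
    gromovProduct (letterValue f r)⁻¹ (letterValue f s) +
      gromovProduct (letterValue f s)⁻¹ (letterValue f t) < (letterValue f s).norm := by
  have hst : s.1 ≠ t.1 := hrt ▸ hrs.symm
  have hle₁ := hf.two_mul_gromovProduct_le_norm_right hrs
  have hle₂ := hf.two_mul_gromovProduct_le_norm_left hst
  by_contra hge
  by_cases hsign : r.2 = t.2
  · obtain rfl : r = t := Prod.ext hrt hsign
    have hle : (letterValue f s).norm ≤ (letterValue f r).norm := by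
      have := hf.two_mul_gromovProduct_le_norm_left hrs
      omega
    obtain ⟨g, hg⟩ :=
      exists_conj_norm_add_norm_lt (letterValue_ne_one hne s) hle (by omega) (by omega)
    exact (hf r s hrs g).not_gt hg
  · obtain rfl : t = (r.1, !r.2) := Prod.ext hrt.symm (Bool.eq_not.mpr (Ne.symm hsign))
    rw [letterValue_not] at hge hle₂
    have hself := two_mul_gromovProduct_inv_self_lt (letterValue_ne_one hne s)
    have := min_gromovProduct_le (letterValue f s)⁻¹ (letterValue f r)⁻¹ (letterValue f s)
    omega

theorem isNielsenReduced {f : Fin 2 → FreeGroup α} (hf : IsNielsenMinimal f)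
    (hne : ∀ i, f i ≠ 1) : IsNielsenReduced f := by
  intro r s t hrs hst
  have hself := two_mul_gromovProduct_inv_self_lt (letterValue_ne_one hne s)
  by_cases hrs' : r.1 = s.1
  · obtain rfl : r = s := Prod.ext hrs' (hrs hrs')
    by_cases hst' : r.1 = t.1
    · obtain rfl : r = t := Prod.ext hst' (hst hst')
      omega
    · have := hf.two_mul_gromovProduct_le_norm_left hst'
      omega
  · by_cases hst' : s.1 = t.1
    · obtain rfl : s = t := Prod.ext hst' (hst hst')
      have := hf.two_mul_gromovProduct_le_norm_right hrs'
      omega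
    · exact hf.gromovProduct_add_lt_of_ne hne hrs' (by omega)

end IsNielsenMinimal

end NielsenReduced

section ChainRelations

open scoped Pointwise

variable {G : Type*} [Group G]

/-- The relations satisfied in `Out F₂` by the classes `s, t` of `σ, τ` together with those, `p` and
`n`, of the permutation and the inversion that generate the signed permutations of the basis. -/
structure ChainRelations (s t p n : G) : Prop where
  p_mul_s : p * s = t * p
  p_mul_t : p * t = s * p
  s_mul_n_mul_s : s * n * s = n
  t_mul_n_mul_t : t * n * t = n
  t_mul_n_mul_s : t * n * s = p * t

/-- The positive and the negative words in `s, t`, which are the values of the chains of type (C1)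
and (C2) respectively. -/
def chainSet (s t : G) : Set G :=
  Submonoid.closure {s, t} ∪ Submonoid.closure {s⁻¹, t⁻¹}

lemma mulAut_smul_closure_pair (φ : MulAut G) (x y : G) :
    φ • Submonoid.closure {x, y} = Submonoid.closure {φ x, φ y} := by
  rw [Submonoid.smul_closure, Set.smul_set_insert, Set.smul_set_singleton, MulAut.smul_def,
    MulAut.smul_def]

namespace ChainRelations

variable {s t p n : G}

lemma conj_p_smul_closure (h : ChainRelations s t p n) :
    MulAut.conj p • Submonoid.closure {s, t} = Submonoid.closure {s, t} := by
  rw [mulAut_smul_closure_pair, MulAut.conj_apply, MulAut.conj_apply, h.p_mul_s, h.p_mul_t,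
    mul_inv_cancel_right, mul_inv_cancel_right, Set.pair_comm]

lemma conj_p_smul_chainSet (h : ChainRelations s t p n) :
    MulAut.conj p • chainSet s t = chainSet s t := by
  rw [chainSet, Set.smul_set_union, ← Submonoid.coe_pointwise_smul,
    ← Submonoid.coe_pointwise_smul, h.conj_p_smul_closure, mulAut_smul_closure_pair, map_inv,
    map_inv, MulAut.conj_apply, MulAut.conj_apply, h.p_mul_s, h.p_mul_t, mul_inv_cancel_right,
    mul_inv_cancel_right, Set.pair_comm t⁻¹]

lemma conj_n_smul_chainSet (h : ChainRelations s t p n) :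
    MulAut.conj n • chainSet s t = chainSet s t := by
  have hs : MulAut.conj n s = s⁻¹ :=
    mul_inv_eq_of_eq_mul (eq_inv_mul_of_mul_eq (by rw [← mul_assoc, h.s_mul_n_mul_s]))
  have ht : MulAut.conj n t = t⁻¹ :=
    mul_inv_eq_of_eq_mul (eq_inv_mul_of_mul_eq (by rw [← mul_assoc, h.t_mul_n_mul_t]))
  rw [chainSet, Set.smul_set_union, ← Submonoid.coe_pointwise_smul,
    ← Submonoid.coe_pointwise_smul, mulAut_smul_closure_pair, mulAut_smul_closure_pair, map_inv,
    map_inv, hs, ht, inv_inv, inv_inv, Set.union_comm]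

lemma conj_smul_chainSet (h : ChainRelations s t p n) {g : G}
    (hg : g ∈ Subgroup.closure {p, n}) : MulAut.conj g • chainSet s t = chainSet s t := by
  have hle : Subgroup.closure {p, n} ≤
      (MulAction.stabilizer (MulAut G) (chainSet s t)).comap MulAut.conj := by
    rw [Subgroup.closure_le]
    rintro _ (rfl | rfl)
    exacts [h.conj_p_smul_chainSet, h.conj_n_smul_chainSet]
  exact hle hg

lemma mul_mem_of_mem_closure (h : ChainRelations s t p n) {x g : G}
    (hx : x ∈ (Subgroup.closure {p, n} : Set G) * chainSet s t)
    (hg : g ∈ Subgroup.closure {p, n}) :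
    x * g ∈ (Subgroup.closure {p, n} : Set G) * chainSet s t := by
  obtain ⟨w, hw, c, hc, rfl⟩ := Set.mem_mul.mp hx
  have hconj : MulAut.conj g⁻¹ c ∈ chainSet s t := by
    rw [← h.conj_smul_chainSet (inv_mem hg)]
    exact Set.smul_mem_smul_set hc
  rw [show w * c * g = w * g * MulAut.conj g⁻¹ c by rw [MulAut.conj_apply]; group]
  exact Set.mul_mem_mul (mul_mem hw hg) hconj

/-- A positive word ending in `t` absorbs `s⁻¹` because `t * s⁻¹ = p⁻¹ * t * n`. -/
lemma chainSet_mul_inv_mem (h : ChainRelations s t p n) {c : G} (hc : c ∈ chainSet s t) :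
    c * s⁻¹ ∈ (Subgroup.closure {p, n} : Set G) * chainSet s t := by
  have hp : p ∈ Subgroup.closure {p, n} := Subgroup.subset_closure (by simp)
  have hn : n ∈ Subgroup.closure {p, n} := Subgroup.subset_closure (by simp)
  have hs : s⁻¹ ∈ Submonoid.closure {s⁻¹, t⁻¹} := Submonoid.subset_closure (by simp)
  have ht : t ∈ Submonoid.closure {s, t} := Submonoid.subset_closure (by simp)
  have hts : t * s⁻¹ = p⁻¹ * t * n := by
    rw [mul_inv_eq_iff_eq_mul, mul_assoc, mul_assoc, ← mul_assoc t, h.t_mul_n_mul_s,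
      inv_mul_cancel_left]
  have hsub := Set.subset_mul_right (chainSet s t) (one_mem (Subgroup.closure {p, n}))
  rcases hc with hc | hc
  · induction hc using Submonoid.closure_induction_right with
    | one => exact hsub (.inr (by rwa [one_mul]))
    | mul_right c hc y hy =>
      rcases hy with hy | hy
      · exact hsub (.inl (by rwa [hy, mul_inv_cancel_right]))
      · have hpc : MulAut.conj p c ∈ Submonoid.closure {s, t} := by
          rw [← h.conj_p_smul_closure]
          exact Submonoid.smul_mem_pointwise_smul _ _ _ hc
        have hmem := h.mul_mem_of_mem_closure
          (Set.mul_mem_mul (inv_mem hp) (.inl (mul_mem hpc ht))) hn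
        rwa [Set.mem_singleton_iff.mp hy, mul_assoc c, hts,
          show c * (p⁻¹ * t * n) = p⁻¹ * (MulAut.conj p c * t) * n by
            rw [MulAut.conj_apply]; group]
  · exact hsub (.inr (mul_mem hc hs))

lemma mul_inv_mem (h : ChainRelations s t p n) {x : G}
    (hx : x ∈ (Subgroup.closure {p, n} : Set G) * chainSet s t) :
    x * s⁻¹ ∈ (Subgroup.closure {p, n} : Set G) * chainSet s t := by
  obtain ⟨w, hw, c, hc, rfl⟩ := Set.mem_mul.mp hx
  obtain ⟨w', hw', c', hc', hcc'⟩ := Set.mem_mul.mp (h.chainSet_mul_inv_mem hc)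
  rw [mul_assoc, ← hcc', ← mul_assoc]
  exact Set.mul_mem_mul (mul_mem hw hw') hc'

theorem closure_subset (h : ChainRelations s t p n) :
    (Subgroup.closure {s, p, n} : Set G) ⊆
      (Subgroup.closure {p, n} : Set G) * chainSet s t := by
  have hp : p ∈ Subgroup.closure {p, n} := Subgroup.subset_closure (by simp)
  have hn : n ∈ Subgroup.closure {p, n} := Subgroup.subset_closure (by simp)
  have hs (x : G) : x * s = x * n⁻¹ * s⁻¹ * n := by
    rw [mul_assoc, mul_assoc, mul_right_inj]
    exact eq_inv_mul_of_mul_eq (eq_inv_mul_of_mul_eq (by rw [← mul_assoc, h.s_mul_n_mul_s]))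
  intro x hx
  induction hx using Subgroup.closure_induction_right with
  | one => exact Set.subset_mul_right _ (one_mem (Subgroup.closure _)) (.inl (one_mem _))
  | mul_right x _ y hy ih =>
    obtain rfl | rfl | rfl := hy
    · rw [hs]
      exact h.mul_mem_of_mem_closure
        (h.mul_inv_mem (h.mul_mem_of_mem_closure ih (inv_mem hn))) hn
    · exact h.mul_mem_of_mem_closure ih hp
    · exact h.mul_mem_of_mem_closure ih hn
  | mul_inv_cancel x _ y hy ih =>
    obtain rfl | rfl | rfl := hy
    · exact h.mul_inv_mem ih
    · exact h.mul_mem_of_mem_closure ih (inv_mem hp)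
    · exact h.mul_mem_of_mem_closure ih (inv_mem hn)

end ChainRelations

end ChainRelations

section OuterAut

variable {G : Type*} [Group G]

lemma conj_apply_eq (φ : MulAut G) (g : G) :
    MulAut.conj (φ g) = φ * MulAut.conj g * φ⁻¹ := by
  ext w
  simp only [MulAut.mul_apply, MulAut.conj_apply, map_mul, map_inv, MulAut.apply_inv_self]

instance normal_range_conj : (MulAut.conj : G →* MulAut G).range.Normal where
  conj_mem := by
    rintro _ ⟨g, rfl⟩ φ
    exact ⟨φ g, conj_apply_eq φ g⟩

/-- The outer automorphism group, in which automorphisms that agree up to conjugation by a fixed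
element are identified. -/
abbrev OuterAut (G : Type*) [Group G] : Type _ := MulAut G ⧸ (MulAut.conj : G →* MulAut G).range

/-- The class of an automorphism in the outer automorphism group. -/
abbrev OuterAut.mk : MulAut G →* OuterAut G := QuotientGroup.mk' _

lemma OuterAut.mk_conj_mul (g : G) (φ : MulAut G) : mk (MulAut.conj g * φ) = mk φ := by
  rw [map_mul, show mk (MulAut.conj g) = 1 from (QuotientGroup.eq_one_iff _).mpr ⟨g, rfl⟩, one_mul]

lemma OuterAut.isConj_of_mk_eq {φ ψ : MulAut G} (h : mk φ = mk ψ) (w : G) :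
    IsConj (φ w) (ψ w) := by
  obtain ⟨g, hg⟩ := QuotientGroup.eq.mp h
  rw [show ψ = φ * MulAut.conj g by rw [hg, mul_inv_cancel_left], MulAut.mul_apply,
    MulAut.conj_apply, map_mul, map_mul, map_inv]
  exact isConj_iff.mpr ⟨φ g, rfl⟩

end OuterAut

section NielsenGenerators

/-- The automorphism exchanging `a` and `b`. -/
def swapAut : MulAut F :=
  mkAut gb ga gb ga (by simp [ga, gb]) (by simp [ga, gb]) (by simp [ga, gb]) (by simp [ga, gb])

/-- The automorphism inverting `a` and fixing `b`. -/
def invAut : MulAut F :=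
  mkAut ga⁻¹ gb ga⁻¹ gb
    (by simp [ga, gb]) (by simp [ga, gb]) (by simp [ga, gb]) (by simp [ga, gb])

lemma σ_apply_ga : σ ga = ga * gb := by simp [σ, mkAut, ga]
lemma σ_apply_gb : σ gb = gb := by simp [σ, mkAut, gb]
lemma τ_apply_ga : τ ga = ga := by simp [τ, mkAut, ga]
lemma τ_apply_gb : τ gb = gb * ga := by simp [τ, mkAut, gb]
lemma swapAut_apply_ga : swapAut ga = gb := by simp [swapAut, mkAut, ga]
lemma swapAut_apply_gb : swapAut gb = ga := by simp [swapAut, mkAut, gb]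
lemma invAut_apply_ga : invAut ga = ga⁻¹ := by simp [invAut, mkAut, ga]
lemma invAut_apply_gb : invAut gb = gb := by simp [invAut, mkAut, gb]

lemma mulAut_ext {φ ψ : MulAut F} (ha : φ ga = ψ ga) (hb : φ gb = ψ gb) : φ = ψ := by
  refine MulEquiv.toMonoidHom_injective (FreeGroup.ext_hom _ _ fun i => ?_)
  fin_cases i
  exacts [ha, hb]

lemma swapAut_mul_σ : swapAut * σ = τ * swapAut := by
  apply mulAut_ext <;> simp only [MulAut.mul_apply, swapAut_apply_ga, swapAut_apply_gb, map_mul,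
    σ_apply_ga, σ_apply_gb, τ_apply_ga, τ_apply_gb]

lemma swapAut_mul_τ : swapAut * τ = σ * swapAut := by
  apply mulAut_ext <;> simp only [MulAut.mul_apply, swapAut_apply_ga, swapAut_apply_gb, map_mul,
    σ_apply_ga, σ_apply_gb, τ_apply_ga, τ_apply_gb]

lemma τ_mul_invAut_mul_τ : τ * invAut * τ = invAut := by
  apply mulAut_ext <;> simp only [MulAut.mul_apply, invAut_apply_ga, invAut_apply_gb, map_mul,
    map_inv, τ_apply_ga, τ_apply_gb, mul_inv_cancel_right]

lemma σ_mul_invAut_mul_σ : σ * invAut * σ = MulAut.conj gb⁻¹ * invAut := by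
  apply mulAut_ext <;> simp only [MulAut.mul_apply, invAut_apply_ga, invAut_apply_gb, map_mul,
    map_inv, σ_apply_ga, σ_apply_gb, MulAut.conj_inv_apply]
  all_goals group

lemma τ_mul_invAut_mul_σ : τ * invAut * σ = MulAut.conj ga⁻¹ * (swapAut * τ) := by
  apply mulAut_ext <;> simp only [MulAut.mul_apply, invAut_apply_ga, invAut_apply_gb, map_mul,
    map_inv, σ_apply_ga, σ_apply_gb, τ_apply_ga, τ_apply_gb, swapAut_apply_ga, swapAut_apply_gb,
    MulAut.conj_inv_apply]
  all_goals group

/-- The group of signed permutations of the basis `a, b`. -/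
def signedPerms : Subgroup (MulAut F) := Subgroup.closure {swapAut, invAut}

lemma swapAut_mem_signedPerms : swapAut ∈ signedPerms := Subgroup.subset_closure (by simp)
lemma invAut_mem_signedPerms : invAut ∈ signedPerms := Subgroup.subset_closure (by simp)

lemma exists_signedPerm_apply_eq (r s : Fin 2 × Bool) (hrs : r.1 ≠ s.1) :
    ∃ ω ∈ signedPerms, ω ga = FreeGroup.mk [r] ∧ ω gb = FreeGroup.mk [s] := by
  obtain ⟨i, x⟩ := r
  obtain ⟨j, y⟩ := s
  have hij : i ≠ j := hrs
  refine ⟨(if i = 0 then 1 else swapAut) * (if x then 1 else invAut) *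
    (if y then 1 else swapAut * invAut * swapAut), ?_, ?_⟩
  · have hswap := swapAut_mem_signedPerms
    have hinv := invAut_mem_signedPerms
    refine mul_mem (mul_mem ?_ ?_) ?_ <;> split_ifs
    exacts [one_mem _, hswap, one_mem _, hinv, one_mem _, mul_mem (mul_mem hswap hinv) hswap]
  · obtain ⟨rfl, rfl⟩ | ⟨rfl, rfl⟩ : i = 0 ∧ j = 1 ∨ i = 1 ∧ j = 0 := by omega
    all_goals
      cases x <;> cases y <;>
      simp only [reduceIte, one_ne_zero, Bool.false_eq_true, MulAut.mul_apply, MulAut.one_apply,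
        map_inv, swapAut_apply_ga, swapAut_apply_gb, invAut_apply_ga, invAut_apply_gb] <;>
      exact ⟨rfl, rfl⟩

lemma letterValue_of_comp (φ : MulAut F) (r : Fin 2 × Bool) :
    letterValue (fun i => φ (FreeGroup.of i)) r = φ (FreeGroup.mk [r]) := by
  rcases r with ⟨i, _ | _⟩ <;> simp [letterValue, FreeGroup.of, ← map_inv, FreeGroup.invRev]

open scoped Pointwise in
lemma signedPerms_le_stabilizer :
    signedPerms ≤ MulAction.stabilizer (MulAut F) ({ga, ga⁻¹, gb, gb⁻¹} : Set F) := by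
  rw [signedPerms, Subgroup.closure_le]
  rintro φ (rfl | rfl) <;> refine MulAction.mem_stabilizer_iff.mpr (Set.ext fun u => ?_) <;>
    simp only [Set.smul_set_insert, Set.smul_set_singleton, MulAut.smul_def, map_inv, inv_inv,
      swapAut_apply_ga, swapAut_apply_gb, invAut_apply_ga, invAut_apply_gb,
      Set.mem_insert_iff, Set.mem_singleton_iff] <;>
    tauto

open scoped Pointwise in
lemma isW1_of_mem_signedPerms {β : MulAut F} (hβ : β ∈ signedPerms) : IsW1 β := by
  have hstab : β • ({ga, ga⁻¹, gb, gb⁻¹} : Set F) = {ga, ga⁻¹, gb, gb⁻¹} :=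
    signedPerms_le_stabilizer hβ
  constructor <;> rw [← hstab, ← MulAut.smul_def] <;> exact Set.smul_mem_smul_set (by simp)

lemma exists_eq_mk_singleton {u : F} (hu : u ≠ 1) (hnorm : u.norm ≤ 1) :
    ∃ r, u = FreeGroup.mk [r] := by
  have hpos := FreeGroup.norm_eq_zero.not.mpr hu
  obtain ⟨r, hr⟩ := List.length_eq_one_iff.mp (show u.toWord.length = 1 by
    rw [FreeGroup.norm] at hnorm hpos; omega)
  exact ⟨r, by rw [← hr, FreeGroup.mk_toWord]⟩

lemma mem_signedPerms_of_norm_le_one {φ : MulAut F} (ha : (φ ga).norm ≤ 1)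
    (hb : (φ gb).norm ≤ 1) : φ ∈ signedPerms := by
  have hne : ∀ i, φ (FreeGroup.of i) ≠ 1 := fun i =>
    (map_ne_one_iff φ φ.injective).mpr (FreeGroup.of_ne_one i)
  obtain ⟨r, hr⟩ := exists_eq_mk_singleton (hne 0) ha
  obtain ⟨s, hs⟩ := exists_eq_mk_singleton (hne 1) hb
  have hrs : r.1 ≠ s.1 := by
    intro heq
    by_cases hsign : r.2 = s.2
    · rw [show r = s from Prod.ext heq hsign, ← hs] at hr
      exact absurd (φ.injective hr) (by decide)
    · have hinv : FreeGroup.mk [(s.1, !s.2)] = (FreeGroup.mk [s])⁻¹ := by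
        simp only [FreeGroup.inv_mk, FreeGroup.invRev, List.map_cons, List.map_nil,
          List.reverse_singleton]
      rw [show r = (s.1, !s.2) from Prod.ext heq (Bool.eq_not.mpr hsign), hinv, ← hs,
        ← map_inv] at hr
      exact absurd (φ.injective hr) (by decide)
  obtain ⟨ω, hω, hωa, hωb⟩ := exists_signedPerm_apply_eq r s hrs
  rwa [show φ = ω from mulAut_ext (hr.trans hωa.symm) (hs.trans hωb.symm)]

/-- The subgroup of `Aut F₂` generated by the elementary Nielsen transformations. -/
def nielsenAuts : Subgroup (MulAut F) := Subgroup.closure {σ, swapAut, invAut}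

lemma σ_mem_nielsenAuts : σ ∈ nielsenAuts := Subgroup.subset_closure (by simp)

lemma signedPerms_le_nielsenAuts : signedPerms ≤ nielsenAuts :=
  Subgroup.closure_mono (Set.subset_insert _ _)

lemma conj_mem_nielsenAuts (g : F) : MulAut.conj g ∈ nielsenAuts := by
  have hswap := signedPerms_le_nielsenAuts swapAut_mem_signedPerms
  have hinv := signedPerms_le_nielsenAuts invAut_mem_signedPerms
  have hσ := σ_mem_nielsenAuts
  have hb : MulAut.conj gb ∈ nielsenAuts := by
    rw [← inv_mem_iff, ← map_inv, ← mul_inv_eq_of_eq_mul σ_mul_invAut_mul_σ]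
    exact mul_mem (mul_mem (mul_mem hσ hinv) hσ) (inv_mem hinv)
  have ha : MulAut.conj ga ∈ nielsenAuts := by
    rw [← swapAut_apply_gb, conj_apply_eq]
    exact mul_mem (mul_mem hswap hb) (inv_mem hswap)
  induction g using FreeGroup.induction_on with
  | C1 => simpa only [map_one] using one_mem _
  | of i =>
    fin_cases i
    exacts [ha, hb]
  | inv_of i hi => simpa only [map_inv] using inv_mem hi
  | mul x y hx hy => simpa only [map_mul] using mul_mem hx hy

lemma isNielsenMinimal_of_forall_le {φ : MulAut F} (hφ : ∀ η ∈ nielsenAuts,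
    (φ ga).norm + (φ gb).norm ≤ (φ (η ga)).norm + (φ (η gb)).norm) :
    IsNielsenMinimal fun i => φ (FreeGroup.of i) := by
  intro r s hrs g
  obtain ⟨ω, hω, hωa, hωb⟩ := exists_signedPerm_apply_eq r s hrs
  have hmin := hφ (MulAut.conj (φ⁻¹ g) * ω * σ)
    (mul_mem (mul_mem (conj_mem_nielsenAuts _) (signedPerms_le_nielsenAuts hω)) σ_mem_nielsenAuts)
  simp only [MulAut.mul_apply, MulAut.conj_apply, σ_apply_ga, σ_apply_gb, map_mul, map_inv, hωa,
    hωb, MulAut.apply_inv_self] at hmin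
  have hsum : (φ (FreeGroup.mk [r])).norm + (φ (FreeGroup.mk [s])).norm =
      (φ ga).norm + (φ gb).norm := by
    simp only [← letterValue_of_comp, norm_letterValue]
    obtain ⟨hr, hs⟩ | ⟨hr, hs⟩ : r.1 = 0 ∧ s.1 = 1 ∨ r.1 = 1 ∧ s.1 = 0 := by omega
    · rw [hr, hs, ga, gb]
    · rw [hr, hs, ga, gb, add_comm]
  simp only [letterValue_of_comp, hsum]
  simpa only [mul_assoc, inv_mul_cancel_left] using hmin

theorem nielsenAuts_eq_top : nielsenAuts = ⊤ := by
  refine (Subgroup.eq_top_iff' _).mpr fun φ => ?_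
  obtain ⟨η, hη, hmin⟩ := exists_minimalFor_of_wellFoundedLT (· ∈ nielsenAuts)
    (fun η => (φ (η ga)).norm + (φ (η gb)).norm) ⟨1, one_mem _⟩
  set ψ := φ * η with hψ
  have hred : IsNielsenReduced fun i => ψ (FreeGroup.of i) := by
    refine IsNielsenMinimal.isNielsenReduced (isNielsenMinimal_of_forall_le fun θ hθ => ?_)
      fun i => (map_ne_one_iff ψ ψ.injective).mpr (FreeGroup.of_ne_one i)
    exact le_of_not_gt fun hlt => (hmin (mul_mem hη hθ) hlt.le).not_gt hlt
  have hnorm (u : F) : (ψ⁻¹ u).norm ≤ u.norm := by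
    have hlift : FreeGroup.lift (fun i => ψ (FreeGroup.of i)) = ψ.toMonoidHom :=
      FreeGroup.ext_hom _ _ fun i => FreeGroup.lift_apply_of
    simpa [hlift] using hred.norm_le_norm_lift (ψ⁻¹ u)
  have hψ_mem : ψ⁻¹ ∈ signedPerms := mem_signedPerms_of_norm_le_one
    ((hnorm ga).trans_eq (FreeGroup.norm_of 0)) ((hnorm gb).trans_eq (FreeGroup.norm_of 1))
  rw [show φ = ψ * η⁻¹ by rw [hψ, mul_inv_cancel_right]]
  exact mul_mem (inv_mem_iff.mp (signedPerms_le_nielsenAuts hψ_mem)) (inv_mem hη)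

end NielsenGenerators

section Chains

lemma exists_map_prod_of_mem_closure_pair {M : Type*} [Monoid M] {x y c : M}
    (hc : c ∈ Submonoid.closure {x, y}) :
    ∃ l : List (ℕ × ℕ), l ≠ [] ∧ c = (l.map fun p => y ^ p.2 * x ^ p.1).prod := by
  induction hc using Submonoid.closure_induction_left with
  | one => exact ⟨[(0, 0)], by simp⟩
  | mul_left z hz c _ ih =>
    obtain ⟨l, -, rfl⟩ := ih
    rcases hz with rfl | rfl
    · exact ⟨(1, 0) :: l, by simp⟩
    · exact ⟨(0, 1) :: l, by simp⟩

lemma isC1_of_mem_closure {φ : MulAut F} (hφ : φ ∈ Submonoid.closure {σ, τ}) : IsC1 φ :=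
  exists_map_prod_of_mem_closure_pair hφ

lemma isC2_of_mem_closure {φ : MulAut F} (hφ : φ ∈ Submonoid.closure {σ⁻¹, τ⁻¹}) : IsC2 φ := by
  obtain ⟨l, hl, rfl⟩ := exists_map_prod_of_mem_closure_pair hφ
  exact ⟨l, hl, by simp only [chainC2, inv_pow]⟩

lemma chainRelations_mk : ChainRelations (OuterAut.mk σ) (OuterAut.mk τ) (OuterAut.mk swapAut)
    (OuterAut.mk invAut) where
  p_mul_s := by simp only [← map_mul, swapAut_mul_σ]
  p_mul_t := by simp only [← map_mul, swapAut_mul_τ]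
  s_mul_n_mul_s := by simp only [← map_mul, σ_mul_invAut_mul_σ, OuterAut.mk_conj_mul]
  t_mul_n_mul_t := by simp only [← map_mul, τ_mul_invAut_mul_τ]
  t_mul_n_mul_s := by simp only [← map_mul, τ_mul_invAut_mul_σ, OuterAut.mk_conj_mul]

lemma exists_isC1_or_isC2_of_mem_chainSet {c : OuterAut F}
    (hc : c ∈ chainSet (OuterAut.mk σ) (OuterAut.mk τ)) :
    ∃ φ, (IsC1 φ ∨ IsC2 φ) ∧ OuterAut.mk φ = c := by
  rw [chainSet, ← map_inv, ← map_inv, ← Set.image_pair, ← Set.image_pair OuterAut.mk σ⁻¹,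
    ← MonoidHom.map_mclosure, ← MonoidHom.map_mclosure] at hc
  rcases hc with ⟨φ, hφ, rfl⟩ | ⟨φ, hφ, rfl⟩
  exacts [⟨φ, .inl (isC1_of_mem_closure hφ), rfl⟩, ⟨φ, .inr (isC2_of_mem_closure hφ), rfl⟩]

end Chains

/-- Every automorphism of `F₂` agrees, up to conjugacy on every element, with `β ∘ φ'`
where `β` is of type (W1) and `φ'` is a chain of type (C1) or (C2). -/
theorem stmt0 (φ : MulAut F) :
    ∃ β : MulAut F, IsW1 β ∧ ∃ φ' : MulAut F, (IsC1 φ' ∨ IsC2 φ') ∧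
      ∀ w : F, IsConj (β (φ' w)) (φ w) := by
  have hφ : OuterAut.mk φ ∈ Subgroup.closure
      {OuterAut.mk σ, OuterAut.mk swapAut, OuterAut.mk invAut} := by
    rw [← Set.image_pair, ← Set.image_insert_eq, ← MonoidHom.map_closure]
    exact Subgroup.mem_map_of_mem _ (nielsenAuts_eq_top.ge (Subgroup.mem_top φ))
  obtain ⟨w, hw, c, hc, hwc⟩ := Set.mem_mul.mp (chainRelations_mk.closure_subset hφ)
  rw [← Set.image_pair, ← MonoidHom.map_closure] at hw
  obtain ⟨β, hβ, rfl⟩ := hw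
  obtain ⟨φ', hφ', rfl⟩ := exists_isC1_or_isC2_of_mem_chainSet hc
  exact ⟨β, isW1_of_mem_signedPerms hβ, φ', hφ',
    OuterAut.isConj_of_mk_eq ((map_mul OuterAut.mk β φ').trans hwc)⟩
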